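/- arXiv:2406.10752 — 2 statements merged into one kernel-verified Lean document; each statement's English description precedes it below -/
import Mathlib

section
/- Fix a chore-division instance with n ≥ 2 agents, m ≥ n chores, and additive cost functions. Suppose all agents agree on the set of the n−1 most costly chores: there exists a set T ⊆ M with |T| = n−1 such that for every agent i, every e ∈ T and every f ∈ M \ T, c_i({e}) ≥ c_i({f}). Then a max(2, n−2)-EFX allocation exists. -/
/-- `X` is an allocation: pairwise disjoint bundles covering all chores. -/
def IsAllocation {M : Type*} {n : ℕ} (X : Fin n → Finset M) : Prop :=
  (∀ i j : Fin n, i ≠ j → Disjoint (X i) (X j)) ∧ (∀ e : M, ∃ i : Fin n, e ∈ X i)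

/-!
A `2`-EFX allocation can be grown one chore at a time, as long as every unassigned chore costs every
agent at most as much as any bundle. Permute the bundles along the cycles of "points to a cheapest
bundle": an agent on a cycle then envies nobody, and may take any unassigned chore `g`, because
`c (X k ∪ {g}) ≤ c (X k) + c {g} ≤ 2 * c (X j)` for every `j`.

To start, one agent takes a set `S` of chores outside `T` and each other agent one chore of `T`.
Choose `S` maximal such that some agent regards this as `2`-EFX. If an unassigned chore `g` cost
some agent `i` more than `S`, then `c i (S ∪ {g}) ≤ 2 * c i {g} ≤ 2 * c i {t}` for all `t ∈ T`, and
`S ∪ {g}` would contradict maximality.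
-/

open Function

section Permutation

variable {α : Type*} [Finite α]

theorem periodicPts_nonempty [Nonempty α] (f : α → α) : (periodicPts f).Nonempty := by
  obtain ⟨x⟩ := ‹Nonempty α›
  obtain ⟨a, b, hab, heq⟩ := Finite.exists_ne_map_eq_of_infinite (fun k : ℕ => f^[k] x)
  wlog hlt : a < b generalizing a b
  · exact this b a hab.symm heq.symm (by omega)
  refine ⟨f^[a] x, b - a, by omega, ?_⟩
  rw [IsPeriodicPt, IsFixedPt, ← iterate_add_apply, Nat.sub_add_cancel hlt.le]
  exact heq.symm

theorem exists_perm_apply_eq_or_eq_self [Nonempty α] (f : α → α) :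
    ∃ σ : Equiv.Perm α, (∀ x, σ x = f x ∨ σ x = x) ∧ ∃ x, σ x = f x := by
  classical
  let σ : Equiv.Perm α :=
    Equiv.Perm.ofSubtype (p := (· ∈ periodicPts f)) ((bijOn_periodicPts f).equiv f)
  have hσ : ∀ x ∈ periodicPts f, σ x = f x := fun x hx =>
    Equiv.Perm.ofSubtype_apply_of_mem _ hx
  refine ⟨σ, fun x => ?_, (periodicPts_nonempty f).imp hσ⟩
  by_cases hx : x ∈ periodicPts f
  · exact .inl (hσ x hx)
  · exact .inr (Equiv.Perm.ofSubtype_apply_of_not_mem _ hx)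

end Permutation

section ChoreDivision

variable {ι M R : Type*} [DecidableEq M] [Semiring R] [LinearOrder R]

/-- A normalized, monotone and subadditive cost function on sets of chores. -/
structure IsSubadditiveCost (c : Finset M → R) : Prop where
  map_empty : c ∅ = 0
  mono : Monotone c
  map_union_le : ∀ S S' : Finset M, c (S ∪ S') ≤ c S + c S'

/-- The bundles `X` are `α`-EFX for the cost functions `c`; they need not cover all chores. -/
def IsEFX (α : R) (c : ι → Finset M → R) (X : ι → Finset M) : Prop :=
  ∀ i j, ∀ e ∈ X i, c i (X i \ {e}) ≤ α * c i (X j)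

/-- The invariant of the procedure: `X` is a `2`-EFX partial allocation leaving exactly the chores
in `U` unassigned, each of which costs every agent at most as much as any bundle. -/
structure IsExtendableEFX (c : ι → Finset M → R) (U : Finset M) (X : ι → Finset M) : Prop where
  pairwise_disjoint : Pairwise (Disjoint on X)
  exists_mem_iff : ∀ e, (∃ i, e ∈ X i) ↔ e ∉ U
  singleton_le : ∀ i j, ∀ g ∈ U, c i {g} ≤ c i (X j)
  isEFX : IsEFX 2 c X

namespace IsSubadditiveCost

variable {c : Finset M → R}

theorem nonneg (hc : IsSubadditiveCost c) (S : Finset M) : 0 ≤ c S :=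
  hc.map_empty.symm.trans_le (hc.mono S.empty_subset)

theorem insert_sdiff_singleton_le (hc : IsSubadditiveCost c) (g e : M) (S : Finset M) :
    c (insert g S \ {e}) ≤ c {g} + c S :=
  (hc.mono Finset.sdiff_subset).trans (Finset.insert_eq g S ▸ hc.map_union_le {g} S)

theorem sdiff_singleton_le_two_mul [IsOrderedRing R] (hc : IsSubadditiveCost c)
    {S S' : Finset M} (h : c S ≤ c S') (e : M) : c (S \ {e}) ≤ 2 * c S' :=
  calc c (S \ {e}) ≤ c S := hc.mono Finset.sdiff_subset
    _ ≤ c S' := h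
    _ ≤ 2 * c S' := le_mul_of_one_le_left (hc.nonneg S') one_le_two

end IsSubadditiveCost

theorem isSubadditiveCost_sum [IsOrderedRing R] {w : M → R} (hw : ∀ e, 0 ≤ w e) :
    IsSubadditiveCost fun S => ∑ e ∈ S, w e where
  map_empty := Finset.sum_empty
  mono _ _ h := Finset.sum_le_sum_of_subset_of_nonneg h fun e _ _ => hw e
  map_union_le S S' := by
    rw [← Finset.sum_union_inter]
    exact le_add_of_nonneg_right (Finset.sum_nonneg fun e _ => hw e)

theorem IsEFX.mono [IsOrderedRing R] {α β : R} {c : ι → Finset M → R} {X : ι → Finset M}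
    (h : IsEFX α c X) (hαβ : α ≤ β) (hc : ∀ i j, 0 ≤ c i (X j)) : IsEFX β c X :=
  fun i j e he => (h i j e he).trans (mul_le_mul_of_nonneg_right hαβ (hc i j))

variable [IsOrderedRing R] {c : ι → Finset M → R}

namespace IsExtendableEFX

variable {U : Finset M} {X : ι → Finset M}

theorem comp_perm (h : IsExtendableEFX c U X) (hc : ∀ i, IsSubadditiveCost (c i))
    (σ : Equiv.Perm ι) (hσ : ∀ i, (∀ j, c i (X (σ i)) ≤ c i (X j)) ∨ σ i = i) :
    IsExtendableEFX c U (X ∘ σ) where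
  pairwise_disjoint := h.pairwise_disjoint.comp_of_injective σ.injective
  exists_mem_iff e := σ.surjective.exists.symm.trans (h.exists_mem_iff e)
  singleton_le i j := h.singleton_le i (σ j)
  isEFX i j e he := by
    rcases hσ i with hmin | hfix
    · exact (hc i).sdiff_singleton_le_two_mul (hmin (σ j)) e
    · rw [comp_apply, hfix] at he ⊢
      exact h.isEFX i (σ j) e he

theorem exists_envy_free_agent [Finite ι] [Nonempty ι] (h : IsExtendableEFX c U X)
    (hc : ∀ i, IsSubadditiveCost (c i)) :
    ∃ Y : ι → Finset M, IsExtendableEFX c U Y ∧ ∃ k, ∀ j, c k (Y k) ≤ c k (Y j) := by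
  choose f hf using fun i => Finite.exists_min fun j => c i (X j)
  obtain ⟨σ, hσ, k, hk⟩ := exists_perm_apply_eq_or_eq_self f
  have hmin {i} (hi : σ i = f i) (j) : c i (X (σ i)) ≤ c i (X j) := by rw [hi]; exact hf i j
  exact ⟨X ∘ σ, h.comp_perm hc σ fun i => (hσ i).imp_left hmin, k, fun j => hmin hk (σ j)⟩

theorem update_insert [DecidableEq ι] {g : M} (h : IsExtendableEFX c (insert g U) X)
    (hc : ∀ i, IsSubadditiveCost (c i)) (hg : g ∉ U) {k : ι}
    (hk : ∀ j, c k (X k) ≤ c k (X j)) :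
    IsExtendableEFX c U (update X k (insert g (X k))) := by
  set Y := update X k (insert g (X k))
  have hYk : Y k = insert g (X k) := update_self ..
  have hY_ne {i} (hi : i ≠ k) : Y i = X i := update_of_ne hi ..
  have mem_Y {i e} : e ∈ Y i ↔ e ∈ X i ∨ i = k ∧ e = g := by
    rcases eq_or_ne i k with rfl | hi
    · simp [hYk, or_comm]
    · simp [hY_ne hi, hi]
  have g_notMem (i) : g ∉ X i := fun hi =>
    (h.exists_mem_iff g).1 ⟨i, hi⟩ (Finset.mem_insert_self g U)
  have cost_le (i j) : c i (X j) ≤ c i (Y j) := (hc i).mono fun _ he => mem_Y.2 (.inl he)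
  refine ⟨fun i j hij => ?_, fun e => ?_, fun i j x hx => ?_, fun i j e he => ?_⟩
  · have hdisj := Finset.disjoint_left.1 (h.pairwise_disjoint hij)
    refine Finset.disjoint_left.2 fun e hi hj => ?_
    rw [mem_Y] at hi hj
    grind
  · have := h.exists_mem_iff e
    simp only [mem_Y]
    grind
  · exact (h.singleton_le i j x (Finset.mem_insert_of_mem hx)).trans (cost_le i j)
  · refine le_trans ?_ (mul_le_mul_of_nonneg_left (cost_le i j) zero_le_two)
    rcases eq_or_ne i k with rfl | hi
    · calc c i (Y i \ {e}) ≤ c i {g} + c i (X i) :=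
            hYk ▸ (hc i).insert_sdiff_singleton_le g e (X i)
        _ ≤ c i (X j) + c i (X j) :=
            add_le_add (h.singleton_le i j g (Finset.mem_insert_self g U)) (hk j)
        _ = 2 * c i (X j) := (two_mul _).symm
    · rw [hY_ne hi] at he ⊢
      exact h.isEFX i j e he

theorem exists_empty [Finite ι] [Nonempty ι] (h : IsExtendableEFX c U X)
    (hc : ∀ i, IsSubadditiveCost (c i)) : ∃ Y, IsExtendableEFX c ∅ Y := by
  classical
  induction U using Finset.induction_on generalizing X with
  | empty => exact ⟨X, h⟩
  | insert g U hg ih =>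
    obtain ⟨Y, hY, k, hk⟩ := h.exists_envy_free_agent hc
    exact ih (hY.update_insert hc hg hk)

end IsExtendableEFX

theorem exists_saturated_bundle [Nonempty ι] [Finite M] (hc : ∀ i, IsSubadditiveCost (c i))
    {T : Finset M} (htop : ∀ i, ∀ t ∈ T, ∀ f ∉ T, c i {f} ≤ c i {t}) :
    ∃ (S : Finset M) (k : ι), Disjoint S T ∧
      (∀ e ∈ S, ∀ t ∈ T, c k (S \ {e}) ≤ 2 * c k {t}) ∧
      ∀ i, ∀ g ∉ T, g ∉ S → c i {g} ≤ c i S := by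
  let P (S : Finset M) : Prop :=
    Disjoint S T ∧ ∃ k, ∀ e ∈ S, ∀ t ∈ T, c k (S \ {e}) ≤ 2 * c k {t}
  obtain ⟨S, hS⟩ : ∃ S, Maximal P S :=
    (Set.toFinite {S | P S}).exists_maximal ⟨∅, by simp [P]⟩
  obtain ⟨hST, k, hk⟩ := hS.prop
  refine ⟨S, k, hST, hk, fun i g hgT hgS => ?_⟩
  by_contra! hlt
  suffices P (insert g S) from
    hgS (hS.le_of_ge this (Finset.subset_insert g S) (Finset.mem_insert_self g S))
  refine ⟨Finset.disjoint_insert_left.2 ⟨hgT, hST⟩, i, fun e _ t ht => ?_⟩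
  calc c i (insert g S \ {e}) ≤ c i {g} + c i S := (hc i).insert_sdiff_singleton_le g e S
    _ ≤ c i {t} + c i {t} :=
        add_le_add (htop i t ht g hgT) (hlt.le.trans (htop i t ht g hgT))
    _ = 2 * c i {t} := (two_mul _).symm

theorem isExtendableEFX_elim_singleton [Fintype M] (hc : ∀ i, IsSubadditiveCost (c i))
    {S T : Finset M} (htop : ∀ i, ∀ t ∈ T, ∀ f ∉ T, c i {f} ≤ c i {t}) (hST : Disjoint S T)
    (σ : ι ≃ Option T)
    (hefx : ∀ e ∈ S, ∀ t ∈ T, c (σ.symm none) (S \ {e}) ≤ 2 * c (σ.symm none) {t})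
    (hS : ∀ i, ∀ g ∉ T, g ∉ S → c i {g} ≤ c i S) :
    IsExtendableEFX c (S ∪ T)ᶜ fun i => (σ i).elim S fun t => {t.1} := by
  refine ⟨fun i j hij => ?_, fun e => ?_, fun i j g hg => ?_, fun i j e he => ?_⟩
  · have hne : σ i ≠ σ j := σ.injective.ne hij
    rw [onFun]
    generalize σ i = a, σ j = b at hne ⊢
    rcases a with - | s <;> rcases b with - | t
    · exact absurd rfl hne
    · exact Finset.disjoint_singleton_right.2 (Finset.disjoint_right.1 hST t.2)
    · exact Finset.disjoint_singleton_left.2 (Finset.disjoint_right.1 hST s.2)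
    · exact Finset.disjoint_singleton.2 fun hst => hne (congrArg some (Subtype.ext hst))
  · rw [σ.exists_congr_left]
    simp [Option.exists, or_iff_not_imp_left]
  · obtain ⟨hgS, hgT⟩ : g ∉ S ∧ g ∉ T := by simpa using hg
    rcases σ j with - | t
    · exact hS i g hgT hgS
    · exact htop i t t.2 g hgT
  · rcases hi : σ i with - | s
    · obtain rfl := (σ.symm_apply_eq.2 hi.symm).symm
      rcases σ j with - | t
      · exact (hc _).sdiff_singleton_le_two_mul (by simp) e
      · exact hefx e (by simpa using he) t t.2
    · obtain rfl : e = s := by simpa [hi] using he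
      simpa [hi, (hc i).map_empty] using mul_nonneg zero_le_two ((hc i).nonneg _)

theorem exists_isExtendableEFX [Finite ι] [Finite M] (hc : ∀ i, IsSubadditiveCost (c i))
    {T : Finset M} (hT : T.card + 1 = Nat.card ι)
    (htop : ∀ i, ∀ t ∈ T, ∀ f ∉ T, c i {f} ≤ c i {t}) :
    ∃ U X, IsExtendableEFX c U X := by
  have := Fintype.ofFinite M
  have : Nonempty ι := (Nat.card_pos_iff.1 (by omega)).1
  obtain ⟨S, k, hST, hk, hS⟩ := exists_saturated_bundle hc htop
  obtain ⟨e⟩ : Nonempty (ι ≃ Option T) := Finite.card_eq.1 (by simp [← hT])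
  let σ : ι ≃ Option T := e.trans (Equiv.swap (e k) none)
  have hσ : σ.symm none = k := by simp [σ]
  exact ⟨_, _, isExtendableEFX_elim_singleton hc htop hST σ (hσ ▸ hk) hS⟩

theorem max_two_n_sub_two_efx_top_agreement_general {n : ℕ} [Finite M]
    {c : Fin n → Finset M → R} (hc : ∀ i, IsSubadditiveCost (c i))
    {T : Finset M} (hT : T.card + 1 = n)
    (htop : ∀ i, ∀ t ∈ T, ∀ f ∉ T, c i {f} ≤ c i {t}) :
    ∃ X : Fin n → Finset M, IsAllocation X ∧ IsEFX 2 c X := by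
  have : Nonempty (Fin n) := ⟨⟨0, by omega⟩⟩
  obtain ⟨U, A, hA⟩ := exists_isExtendableEFX hc (by simpa using hT) htop
  obtain ⟨X, hX⟩ := hA.exists_empty hc
  exact ⟨X, ⟨hX.pairwise_disjoint, fun e => (hX.exists_mem_iff e).2 (Finset.notMem_empty e)⟩,
    hX.isEFX⟩

end ChoreDivision

/-- Top-`(n-1)` agreement: if all agents (with additive costs given by item costs `w`)
agree on the set of the `n-1` most costly chores, a `max(2, n-2)`-EFX allocation exists. -/
theorem max_two_n_sub_two_efx_top_agreement
    (n : ℕ) (hn : 2 ≤ n) (M : Type*) [Fintype M] [DecidableEq M]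
    (hm : n ≤ Fintype.card M)
    (w : Fin n → M → ℝ) (hw : ∀ i e, 0 ≤ w i e)
    (T : Finset M) (hT : T.card = n - 1)
    (htop : ∀ i : Fin n, ∀ e ∈ T, ∀ f : M, f ∉ T → w i f ≤ w i e) :
    ∃ X : Fin n → Finset M, IsAllocation X ∧
      ∀ i j : Fin n, ∀ e ∈ X i,
        ∑ f ∈ X i \ {e}, w i f ≤ max 2 ((n : ℝ) - 2) * ∑ f ∈ X j, w i f := by
  have hc (i) := isSubadditiveCost_sum (hw i)
  obtain ⟨X, hX, hefx⟩ := max_two_n_sub_two_efx_top_agreement_general hc (T := T) (by omega)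
    (by simpa using htop)
  exact ⟨X, hX, hefx.mono (le_max_left ..) fun i j => (hc i).nonneg (X j)⟩
end

section
/- For every chore-division instance with three agents and additive cost functions, a 2-EFX allocation exists. -/
/-!
Call a chore large for an agent if it is a most expensive one and costs her at least a fifth of the
total. Most allocations below come from one scheme: a first agent holds a bundle `X` which costs a
second agent at least a fifth of the total, the second agent takes the cheaper of the other two
bundles, which then costs her at most twice as much as either alternative, and the third agent
accepts whichever bundle is left.

* Two agents without large chores: some partition is so balanced for both of them that they accept
  every bundle, and the third agent takes her cheapest one.
* Two agents with a common large chore `g`: take `X = {g}`; one of them cuts the rest, the other one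
  chooses.
* Exactly one agent without large chores, and distinct large chores `a`, `b` of the other two:
  a partition balanced for the first agent, with `b` in the bundle `X`, works unless `a` and `b` are
  so expensive for the owner of `a` that `X = {a, b}` works.
* Three distinct large chores: unless simpler allocations exist, the remaining chores together cost
  every agent more than twice the large chore of another agent, and each agent `i` finds one chore
  `h i` among them that costs at least half of them. Bundles built from the `h i` and the large
  chores then settle this case.
-/

section

open Finset Function

/-! ### Partitions and EFX acceptance -/

section

variable {M : Type*}

/-- `IsPartitionOf S X` says that the (possibly empty) bundles `X i` partition the set `S`. With
`S = univ` and bundles indexed by agents these are the allocations; other sets `S` and index types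
are needed for the partial allocations from which an allocation is assembled. -/
structure IsPartitionOf {ι : Type*} (S : Finset M) (X : ι → Finset M) : Prop where
  disjoint : Pairwise (Disjoint on X)
  mem_iff : ∀ e, e ∈ S ↔ ∃ i, e ∈ X i

namespace IsPartitionOf

variable {ι κ : Type*} {S T : Finset M} {X A : ι → Finset M}

theorem subset (h : IsPartitionOf S X) (i : ι) : X i ⊆ S :=
  fun e he => (h.mem_iff e).2 ⟨i, he⟩

theorem empty : IsPartitionOf ∅ (fun _ : ι => (∅ : Finset M)) :=
  ⟨fun _ _ _ => disjoint_empty_left _, by simp⟩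

theorem comp_equiv (h : IsPartitionOf S X) (σ : κ ≃ ι) : IsPartitionOf S (X ∘ σ) :=
  ⟨h.disjoint.comp_of_injective σ.injective,
    fun e => by simp only [h.mem_iff e, comp_apply, σ.surjective.exists]⟩

theorem isAllocation [Fintype M] {n : ℕ} {X : Fin n → Finset M} (h : IsPartitionOf univ X) :
    IsAllocation X :=
  ⟨fun _ _ hij => h.disjoint hij, fun e => (h.mem_iff e).1 (mem_univ e)⟩

theorem sum_eq [Fintype ι] (h : IsPartitionOf S X) (f : M → ℝ) : ∑ i, (X i).sum f = S.sum f := by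
  classical
  rw [← sum_biUnion fun i _ j _ hij => h.disjoint hij]
  exact congrArg (Finset.sum · f) (Finset.ext fun e => by simp [h.mem_iff e])

variable [DecidableEq M]

theorem union (hX : IsPartitionOf S X) (hA : IsPartitionOf T A) (hST : Disjoint S T) :
    IsPartitionOf (S ∪ T) (fun i => X i ∪ A i) where
  disjoint i j hij := by
    simp only [onFun, disjoint_union_left, disjoint_union_right]
    exact ⟨⟨hX.disjoint hij, (hST.mono (hX.subset j) (hA.subset i)).symm⟩,
      hST.mono (hX.subset i) (hA.subset j), hA.disjoint hij⟩
  mem_iff e := by simp only [mem_union, hX.mem_iff, hA.mem_iff, exists_or]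

theorem cons {n : ℕ} {X : Fin n → Finset M} (h : IsPartitionOf S X) {B : Finset M}
    (hB : Disjoint B S) : IsPartitionOf (B ∪ S) (Fin.cons B X : Fin (n + 1) → Finset M) where
  disjoint := by
    refine Fin.cases (Fin.cases (fun h0 => absurd rfl h0) fun j _ => ?_)
      fun i => Fin.cases (fun _ => ?_) fun j hij => ?_
    · simpa [onFun] using hB.mono_right (h.subset j)
    · simpa [onFun] using (hB.mono_right (h.subset i)).symm
    · simpa [onFun] using h.disjoint (ne_of_apply_ne Fin.succ hij)
  mem_iff e := by
    simp only [mem_union, h.mem_iff, Fin.exists_fin_succ, Fin.cons_zero, Fin.cons_succ]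

end IsPartitionOf

theorem isPartitionOf_vec3_iff {S A B C : Finset M} :
    IsPartitionOf S ![A, B, C] ↔
      (Disjoint A B ∧ Disjoint A C ∧ Disjoint B C) ∧ ∀ e, e ∈ S ↔ e ∈ A ∨ e ∈ B ∨ e ∈ C := by
  constructor
  · intro h
    refine ⟨⟨h.disjoint (i := 0) (j := 1) (by decide), h.disjoint (i := 0) (j := 2) (by decide),
      h.disjoint (i := 1) (j := 2) (by decide)⟩, fun e => ?_⟩
    simp [h.mem_iff e, Fin.exists_fin_succ]
  · rintro ⟨⟨hAB, hAC, hBC⟩, h⟩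
    refine ⟨fun i j hij => ?_, fun e => by simp [h e, Fin.exists_fin_succ]⟩
    fin_cases i <;> fin_cases j <;> first | exact absurd rfl hij | simp_all [onFun, disjoint_comm]

theorem IsPartitionOf.sum_vec3 {S A B C : Finset M} (h : IsPartitionOf S ![A, B, C]) (f : M → ℝ) :
    A.sum f + B.sum f + C.sum f = S.sum f := by
  simpa [Fin.sum_univ_three] using h.sum_eq f

/-- An agent with item costs `c` who holds `P` accepts the bundle `Q` up to the factor `α`: dropping
any one chore from `P` leaves a cost of at most `α` times the cost of `Q`. -/
def EFXAccepts [DecidableEq M] (α : ℝ) (c : M → ℝ) (P Q : Finset M) : Prop :=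
  ∀ e ∈ P, (P \ {e}).sum c ≤ α * Q.sum c

theorem sum_le_sum_of_subset_of_forall_nonneg {c : M → ℝ} (hc : ∀ e, 0 ≤ c e) {P Q : Finset M}
    (h : P ⊆ Q) : P.sum c ≤ Q.sum c :=
  sum_le_sum_of_subset_of_nonneg h fun e _ _ => hc e

theorem sum_triple [DecidableEq M] {a b d : M} (hab : a ≠ b) (had : a ≠ d) (hbd : b ≠ d)
    (f : M → ℝ) : ({a, b, d} : Finset M).sum f = f a + f b + f d := by
  rw [sum_insert (by simp [hab, had]), sum_pair hbd, add_assoc]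

namespace EFXAccepts

variable [DecidableEq M] {α β : ℝ} {c : M → ℝ} {P Q R : Finset M} {a b : M}

theorem of_sum_le (hc : ∀ e, 0 ≤ c e) (h : P.sum c ≤ α * Q.sum c) : EFXAccepts α c P Q :=
  fun _ _ => (sum_le_sum_of_subset_of_forall_nonneg hc sdiff_subset).trans h

theorem singleton (hc : ∀ e, 0 ≤ c e) (hα : 0 ≤ α) : EFXAccepts α c {a} Q := by
  intro e he
  rw [mem_singleton.1 he, Finset.sdiff_self, sum_empty]
  exact mul_nonneg hα (sum_nonneg fun e _ => hc e)

theorem iff_sum_le :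
    EFXAccepts α c P Q ↔ ∀ e ∈ P, P.sum c ≤ α * Q.sum c + c e :=
  forall₂_congr fun e he => by
    rw [sum_eq_sum_sdiff_singleton_add he, add_le_add_iff_right]

theorem pair (hab : a ≠ b) (ha : c a ≤ α * Q.sum c) (hb : c b ≤ α * Q.sum c) :
    EFXAccepts α c {a, b} Q := by
  simp only [iff_sum_le, sum_pair hab, forall_mem_insert, mem_singleton, forall_eq]
  exact ⟨by linarith, by linarith⟩

theorem triple {d : M} (hab : a ≠ b) (had : a ≠ d) (hbd : b ≠ d) (h₁ : c a + c b ≤ α * Q.sum c)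
    (h₂ : c a + c d ≤ α * Q.sum c) (h₃ : c b + c d ≤ α * Q.sum c) :
    EFXAccepts α c {a, b, d} Q := by
  simp only [iff_sum_le, sum_triple hab had hbd, forall_mem_insert, mem_singleton, forall_eq]
  exact ⟨by linarith, by linarith, by linarith⟩

theorem trans_le (h : EFXAccepts α c P Q) (hQR : α * Q.sum c ≤ β * R.sum c) :
    EFXAccepts β c P R :=
  fun e he => (h e he).trans hQR

end EFXAccepts

/-- There is an `α`-EFX allocation for agents with additive costs given by the item costs `c`. -/
def AdmitsEFX [Fintype M] [DecidableEq M] {n : ℕ} (α : ℝ) (c : Fin n → M → ℝ) : Prop :=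
  ∃ X : Fin n → Finset M, IsAllocation X ∧ ∀ i j, EFXAccepts α (c i) (X i) (X j)

theorem admitsEFX_of_vec3 [Fintype M] [DecidableEq M] {α : ℝ} (hα : 1 ≤ α) {c : Fin 3 → M → ℝ}
    (hc : ∀ i e, 0 ≤ c i e) {i j k : Fin 3} (hij : i ≠ j) (hik : i ≠ k) (hjk : j ≠ k)
    {A B C : Finset M} (hX : IsPartitionOf univ ![A, B, C])
    (hiB : EFXAccepts α (c i) A B) (hiC : EFXAccepts α (c i) A C)
    (hjA : EFXAccepts α (c j) B A) (hjC : EFXAccepts α (c j) B C)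
    (hkA : EFXAccepts α (c k) C A) (hkB : EFXAccepts α (c k) C B) : AdmitsEFX α c := by
  have hinj : Injective ![i, j, k] := by
    intro x y; fin_cases x <;> fin_cases y <;> simp_all [eq_comm]
  let σ : Fin 3 ≃ Fin 3 := .ofBijective _ (Finite.injective_iff_bijective.1 hinj)
  refine ⟨![A, B, C] ∘ σ.symm, (hX.comp_equiv σ.symm).isAllocation, σ.surjective.forall.2 fun x =>
    σ.surjective.forall.2 fun y => ?_⟩
  simp only [comp_apply, Equiv.symm_apply_apply]
  rcases eq_or_ne x y with rfl | hxy
  · exact .of_sum_le (hc _) (le_mul_of_one_le_left (sum_nonneg fun e _ => hc _ e) hα)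
  · fin_cases x <;> fin_cases y <;> first | exact absurd rfl hxy | assumption

theorem exists_ne_ne_of_ne : ∀ {i j : Fin 3}, i ≠ j → ∃ k, i ≠ k ∧ j ≠ k := by decide

end

/-! ### Cutting a set of chores in two -/

section

variable {M : Type*} {c : M → ℝ}

theorem exists_efx_cut [DecidableEq M] (hc : ∀ e, 0 ≤ c e) (S : Finset M) :
    ∃ P Q, Disjoint P Q ∧ P ∪ Q = S ∧ Q.sum c ≤ P.sum c ∧ EFXAccepts 1 c P Q := by
  induction S using Finset.induction_on_min_value c with
  | empty =>
    exact ⟨∅, ∅, disjoint_empty_left _, rfl, le_rfl, fun e he => absurd he (notMem_empty e)⟩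
  | insert a S ha hmin ih =>
    obtain ⟨P, Q, hPQ, rfl, hle, hefx⟩ := ih
    obtain ⟨haP, haQ⟩ := not_or.1 (mem_union.not.1 ha)
    have hsum : (insert a Q).sum c = c a + Q.sum c := sum_insert haQ
    rcases le_total ((insert a Q).sum c) (P.sum c) with h | h
    · refine ⟨P, insert a Q, disjoint_insert_right.2 ⟨haP, hPQ⟩, union_insert .., h,
        hefx.trans_le ?_⟩
      linarith [hc a]
    · refine ⟨insert a Q, P, disjoint_insert_left.2 ⟨haP, hPQ.symm⟩, ?_, h, fun e he => ?_⟩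
      · rw [insert_union, union_comm]
      -- `a` is the cheapest chore of its bundle, and without it the bundle costs at most `P`
      have hae : c a ≤ c e := by
        rcases mem_insert.1 he with rfl | he
        · exact le_rfl
        · exact hmin e (mem_union_right _ he)
      linarith [sum_eq_sum_sdiff_singleton_add he c]

theorem exists_subset_sum_mem_Icc {T : Finset M} {lo hi : ℝ} (hlo : 0 ≤ lo)
    (hT : lo ≤ T.sum c) (hhi : 2 * lo ≤ hi) (hitem : ∀ e ∈ T, c e ≤ hi) :
    ∃ B ⊆ T, B.sum c ∈ Set.Icc lo hi := by
  classical
  induction T using Finset.induction_on with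
  | empty => exact ⟨∅, Subset.rfl, hT, by rw [sum_empty]; linarith⟩
  | insert a T ha ih =>
    by_cases hT' : lo ≤ T.sum c
    · obtain ⟨B, hB, hsum⟩ := ih hT' fun e he => hitem e (mem_insert_of_mem he)
      exact ⟨B, hB.trans (subset_insert a T), hsum⟩
    rcases le_total (c a) lo with hca | hca
    · refine ⟨insert a T, Subset.rfl, hT, ?_⟩
      rw [sum_insert ha]
      linarith
    · refine ⟨{a}, singleton_subset_iff.2 (mem_insert_self a T), ?_⟩
      rw [sum_singleton]
      exact ⟨hca, hitem a (mem_insert_self a T)⟩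

theorem exists_isPartitionOf_forall_le_sum {t : ℝ} (ht : 0 ≤ t) {n : ℕ} {T : Finset M}
    (hitem : ∀ e ∈ T, c e ≤ 2 * t) (hT : (2 * n + 1) * t ≤ T.sum c) :
    ∃ B : Fin (n + 1) → Finset M, IsPartitionOf T B ∧ ∀ i, t ≤ (B i).sum c := by
  classical
  induction n generalizing T with
  | zero =>
    exact ⟨fun _ => T, ⟨fun i j hij => absurd (Subsingleton.elim (α := Fin 1) i j) hij,
      fun e => (exists_const (Fin 1)).symm⟩, fun _ => by simpa using hT⟩
  | succ n ih =>
    push_cast at hT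
    have hnt : 0 ≤ n * t := mul_nonneg n.cast_nonneg ht
    obtain ⟨B₀, hB₀, hle, hge⟩ :=
      exists_subset_sum_mem_Icc ht (by linarith : t ≤ T.sum c) le_rfl hitem
    have hrest : (2 * n + 1) * t ≤ (T \ B₀).sum c := by
      rw [sum_sdiff_eq_sub hB₀]
      linarith
    obtain ⟨B, hB, hBt⟩ := ih (fun e he => hitem e (sdiff_subset he)) hrest
    refine ⟨Fin.cons B₀ B, ?_, Fin.cases hle hBt⟩
    simpa only [union_sdiff_of_subset hB₀] using hB.cons disjoint_sdiff

theorem exists_cut_le_three_mul [DecidableEq M] {u w : M → ℝ} (hu : ∀ e, 0 ≤ u e)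
    (hw : ∀ e, 0 ≤ w e) {t : ℝ} (ht : 0 ≤ t) {R : Finset M} (hw_item : ∀ e ∈ R, w e ≤ 2 * t)
    (hwR : 5 * t ≤ R.sum w) (hu_item : ∀ e ∈ R, 2 * u e ≤ R.sum u) :
    ∃ Y ⊆ R, (t ≤ Y.sum w ∧ t ≤ (R \ Y).sum w) ∧
      R.sum u ≤ 3 * Y.sum u ∧ R.sum u ≤ 3 * (R \ Y).sum u := by
  obtain ⟨B, hB, hBt, hmono⟩ : ∃ B : Fin 3 → Finset M, IsPartitionOf R B ∧
      (∀ i, t ≤ (B i).sum w) ∧ Monotone fun i => (B i).sum u := by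
    obtain ⟨B, hB, hBt⟩ := exists_isPartitionOf_forall_le_sum (n := 2) ht hw_item
      (by norm_num [hwR])
    exact ⟨_, hB.comp_equiv (Tuple.sort fun i => (B i).sum u), fun _ => hBt _,
      Tuple.monotone_sort fun i => (B i).sum u⟩
  have h01 : (B 0).sum u ≤ (B 1).sum u := hmono (by decide)
  have h12 : (B 1).sum u ≤ (B 2).sum u := hmono (by decide)
  have hsum := hB.sum_eq u
  rw [Fin.sum_univ_three] at hsum
  have h0 : 0 ≤ (B 0).sum u := sum_nonneg fun e _ => hu e
  have hcompl {Y : Finset M} (i : Fin 3) (h : Disjoint (B i) Y) : t ≤ (R \ Y).sum w :=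
    (hBt i).trans (sum_le_sum_of_subset_of_forall_nonneg hw (subset_sdiff.2 ⟨hB.subset i, h⟩))
  by_cases h2 : 3 * (B 2).sum u ≤ 2 * R.sum u
  · refine ⟨B 2, hB.subset 2, ⟨hBt 2, hcompl 0 (hB.disjoint (by decide))⟩, ?_, ?_⟩
    · linarith
    · rw [sum_sdiff_eq_sub (hB.subset 2)]
      linarith
  -- otherwise `B 0` costs less than a sixth of `R`, and part of `B 2` brings it up to a third
  · obtain ⟨D, hD, hlo, hhi⟩ := exists_subset_sum_mem_Icc (c := u) (T := B 2)
      (lo := R.sum u / 3 - (B 0).sum u) (hi := 2 * R.sum u / 3 - (B 0).sum u)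
      (by linarith) (by linarith) (by linarith)
      fun e he => by linarith [hu_item e (hB.subset 2 he)]
    have hY : B 0 ∪ D ⊆ R := union_subset (hB.subset 0) (hD.trans (hB.subset 2))
    have hYu : (B 0 ∪ D).sum u = (B 0).sum u + D.sum u :=
      sum_union ((hB.disjoint (by decide : (0 : Fin 3) ≠ 2)).mono_right hD)
    have h1Y : Disjoint (B 1) (B 0 ∪ D) := disjoint_union_right.2
      ⟨hB.disjoint (by decide), (hB.disjoint (by decide : (1 : Fin 3) ≠ 2)).mono_right hD⟩
    refine ⟨B 0 ∪ D, hY, ⟨(hBt 0).trans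
      (sum_le_sum_of_subset_of_forall_nonneg hw subset_union_left), hcompl 1 h1Y⟩, ?_, ?_⟩
    · linarith
    · rw [sum_sdiff_eq_sub hY]
      linarith

end

/-! ### Balanced partitions -/

section

variable {M : Type*} {c : M → ℝ} {n : ℕ}

theorem exists_perm_antivary (x a : Fin n → ℝ) : ∃ σ : Equiv.Perm (Fin n), Antivary x (a ∘ σ) := by
  refine ⟨(Tuple.sort x).symm.trans (Fin.revPerm.trans (Tuple.sort a)), fun i j hij => ?_⟩
  have hrev : Fin.rev ((Tuple.sort x).symm i) < Fin.rev ((Tuple.sort x).symm j) :=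
    (Tuple.monotone_sort a).reflect_lt hij
  simpa using Tuple.monotone_sort x (Fin.rev_lt_rev.1 hrev).le

theorem exists_perm_forall_add_le {d : ℝ} {x a : Fin n → ℝ} (hx : ∀ i j, x i ≤ x j + d)
    (ha : ∀ i, a i ∈ Set.Icc 0 d) :
    ∃ σ : Equiv.Perm (Fin n), ∀ i j, x i + a (σ i) ≤ x j + a (σ j) + d := by
  obtain ⟨σ, hσ⟩ := exists_perm_antivary x a
  refine ⟨σ, fun i j => ?_⟩
  rcases le_or_gt (a (σ i)) (a (σ j)) with h | h
  · linarith [hx i j]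
  · linarith [hσ h, (ha (σ i)).2, (ha (σ j)).1]

theorem sum_mem_Icc_of_card_le_one {A : Finset M} {m : ℝ} (hm : 0 ≤ m) (hA : #A ≤ 1)
    (hc : ∀ e ∈ A, c e ∈ Set.Icc 0 m) : A.sum c ∈ Set.Icc 0 m := by
  rcases A.eq_empty_or_nonempty with rfl | hne
  · simpa using hm
  · obtain ⟨a, rfl⟩ := card_eq_one.1 (hA.antisymm hne.card_pos)
    simpa using hc

theorem exists_subset_isPartitionOf_dominating [DecidableEq M] (c : M → ℝ) (n : ℕ)
    (S : Finset M) :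
    ∃ U ⊆ S, ∃ A : Fin n → Finset M, IsPartitionOf U A ∧ (∀ i, #(A i) ≤ 1) ∧
      ∀ e ∈ S \ U, ∀ i, ∃ a ∈ A i, c e ≤ c a := by
  induction n generalizing S with
  | zero => exact ⟨∅, empty_subset S, fun _ => ∅, .empty, fun i => i.elim0, fun _ _ i => i.elim0⟩
  | succ n ih =>
    rcases S.eq_empty_or_nonempty with rfl | hS
    · exact ⟨∅, Subset.rfl, fun _ => ∅, .empty, by simp, by simp⟩
    obtain ⟨m, hm, hmax⟩ := S.exists_max_image c hS
    obtain ⟨U, hU, A, hA, hcard, hdom⟩ := ih (S.erase m)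
    have hmU : m ∉ U := fun h => notMem_erase m S (hU h)
    refine ⟨{m} ∪ U, union_subset (singleton_subset_iff.2 hm) (hU.trans (erase_subset m S)),
      Fin.cons {m} A, hA.cons (disjoint_singleton_left.2 hmU),
      Fin.cases (card_singleton m).le hcard, fun e he => ?_⟩
    simp only [mem_sdiff, mem_union, mem_singleton, not_or] at he
    exact Fin.cases ⟨m, mem_singleton_self m, hmax e he.1⟩
      (hdom e (mem_sdiff.2 ⟨mem_erase.2 ⟨he.2.1, he.1⟩, he.2.2⟩))

-- The chores are dealt out in rounds of `n`, the most expensive ones first, and the rounds are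
-- merged from the last one to the first. The chores of a round can be assigned in any order: each
-- of them costs at least as much as any later chore, so the balance is kept.
theorem exists_isPartitionOf_balanced [DecidableEq M] [NeZero n] (hc : ∀ e, 0 ≤ c e)
    {Q : (Fin n → Finset M) → Prop} (hQ_empty : Q fun _ => ∅)
    (hQ_union : ∀ X A : Fin n → Finset M, Q X → Pairwise (Disjoint on A) → (∀ i, #(A i) ≤ 1) →
      (∀ i j, Disjoint (X i) (A j)) → ∃ σ : Equiv.Perm (Fin n), Q fun i => X i ∪ A (σ i))
    {m : ℝ} (hm : 0 ≤ m) (S : Finset M) (hS : ∀ e ∈ S, c e ≤ m) :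
    ∃ X : Fin n → Finset M,
      IsPartitionOf S X ∧ Q X ∧ ∀ i j, (X i).sum c ≤ (X j).sum c + m := by
  induction S using Finset.strongInduction generalizing m with
  | H S ih =>
    rcases S.eq_empty_or_nonempty with rfl | ⟨s, hs⟩
    · exact ⟨fun _ => ∅, .empty, hQ_empty, fun _ _ => by simpa using hm⟩
    obtain ⟨U, hU, A, hA, hcard, hdom⟩ := exists_subset_isPartitionOf_dominating c n S
    have hA_sum (i : Fin n) : (A i).sum c ∈ Set.Icc 0 m :=
      sum_mem_Icc_of_card_le_one hm (hcard i) fun e he => ⟨hc e, hS e (hU (hA.subset i he))⟩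
    obtain ⟨i₀, hi₀⟩ := Finite.exists_min fun i => (A i).sum c
    have hrest : ∀ e ∈ S \ U, c e ≤ (A i₀).sum c := fun e he => by
      obtain ⟨a, ha, hea⟩ := hdom e he i₀
      exact hea.trans (single_le_sum (fun e _ => hc e) ha)
    have hlt : S \ U ⊂ S := by
      refine sdiff_subset.ssubset_of_ne fun h => ?_
      obtain ⟨a, ha, -⟩ := hdom s (h.symm ▸ hs) 0
      have haU := hA.subset 0 ha
      exact (mem_sdiff.1 (h.symm ▸ hU haU : a ∈ S \ U)).2 haU
    obtain ⟨X, hX, hQX, hbal⟩ := ih _ hlt (hA_sum i₀).1 hrest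
    obtain ⟨σ, hσ⟩ := hQ_union X A hQX hA.disjoint hcard fun i j =>
      disjoint_sdiff_self_left.mono (hX.subset i) (hA.subset j)
    have hXA := hX.union (hA.comp_equiv σ) disjoint_sdiff_self_left
    refine ⟨_, sdiff_union_of_subset hU ▸ hXA, hσ, fun i j => ?_⟩
    have hsum (i : Fin n) : (X i ∪ A (σ i)).sum c = (X i).sum c + (A (σ i)).sum c :=
      sum_union (disjoint_sdiff_self_left.mono (hX.subset i) (hA.subset _))
    rw [hsum, hsum]
    linarith [hbal i j, hi₀ (σ j), (hA_sum (σ i)).2]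

theorem exists_isPartitionOf_balanced_pair [NeZero n] {u v : M → ℝ} (hu : ∀ e, 0 ≤ u e)
    (hv : ∀ e, 0 ≤ v e) {d m : ℝ} (hd : 0 ≤ d) (hm : 0 ≤ m) (hud : ∀ e, u e ≤ d)
    (hvm : ∀ e, v e ≤ m) (S : Finset M) :
    ∃ X : Fin n → Finset M, IsPartitionOf S X ∧ (∀ i j, (X i).sum u ≤ (X j).sum u + d) ∧
      ∀ i j, (X i).sum v ≤ (X j).sum v + m := by
  classical
  refine exists_isPartitionOf_balanced hv
    (Q := fun X => ∀ i j, (X i).sum u ≤ (X j).sum u + d) (by simpa using hd)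
    (fun X A hX _ hcard hdisj => ?_) hm S fun e _ => hvm e
  obtain ⟨σ, hσ⟩ := exists_perm_forall_add_le hX fun i =>
    sum_mem_Icc_of_card_le_one hd (hcard i) fun e _ => ⟨hu e, hud e⟩
  refine ⟨σ, fun i j => ?_⟩
  simpa only [sum_union (hdisj _ _)] using hσ i j

theorem sum_le_two_mul_sum_of_balanced {S : Finset M} {X : Fin 3 → Finset M}
    (hX : IsPartitionOf S X) {d : ℝ} (hd : 5 * d ≤ S.sum c)
    (hbal : ∀ i j, (X i).sum c ≤ (X j).sum c + d) (i j : Fin 3) :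
    (X i).sum c ≤ 2 * (X j).sum c := by
  have hsum := hX.sum_eq c
  rw [Fin.sum_univ_three] at hsum
  have hle : ∀ j, d ≤ (X j).sum c := by
    simp only [Fin.forall_fin_succ, Fin.forall_fin_zero, Fin.succ_zero_eq_one, Fin.succ_one_eq_two]
    refine ⟨?_, ?_, ?_, trivial⟩ <;>
      linarith [hbal 0 1, hbal 0 2, hbal 1 0, hbal 1 2, hbal 2 0, hbal 2 1]
  linarith [hle j, hbal i j]

theorem exists_forall_sum_le_of_card_le_one [NeZero n] (hc : ∀ e, 0 ≤ c e) {b : M} (hb : c b = 0)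
    {A : Fin n → Finset M} (hA : Pairwise (Disjoint on A)) (hcard : ∀ i, #(A i) ≤ 1) :
    ∃ l, (∀ i, i ≠ l → b ∉ A i) ∧ ∀ i, (A l).sum c ≤ (A i).sum c := by
  by_cases h : ∃ l, b ∈ A l
  · obtain ⟨l, hl⟩ := h
    refine ⟨l, fun i hi hbi => disjoint_left.1 (hA hi) hbi hl, fun i => ?_⟩
    have hAl : {b} = A l := eq_of_subset_of_card_le (singleton_subset_iff.2 hl) (hcard l)
    rw [← hAl, sum_singleton, hb]
    exact sum_nonneg fun e _ => hc e
  · obtain ⟨l, hl⟩ := Finite.exists_min fun i => (A i).sum c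
    exact ⟨l, fun i _ hi => h ⟨i, hi⟩, hl⟩

theorem exists_isPartitionOf_balanced_lightest_zero {p v : M → ℝ} (hp : ∀ e, 0 ≤ p e)
    (hv : ∀ e, 0 ≤ v e) {b : M} (hb : p b = 0) {d m : ℝ} (hd : 0 ≤ d) (hm : 0 ≤ m)
    (hpd : ∀ e, p e ≤ d) (hvm : ∀ e, v e ≤ m) (S : Finset M) :
    ∃ X : Fin (n + 1) → Finset M, IsPartitionOf S X ∧
      ((∀ i, b ∉ X (Fin.succ i)) ∧ (∀ i, (X 0).sum p ≤ (X (Fin.succ i)).sum p) ∧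
        ∀ i j, (X (Fin.succ i)).sum p ≤ (X (Fin.succ j)).sum p + d) ∧
      ∀ i j, (X i).sum v ≤ (X j).sum v + m := by
  classical
  refine exists_isPartitionOf_balanced hv (by simpa using fun _ _ => hd)
    (fun X A hX hdisjA hcard hdisj => ?_) hm S fun e _ => hvm e
  obtain ⟨hbX, hX0, hXd⟩ := hX
  obtain ⟨l, hbl, hl⟩ := exists_forall_sum_le_of_card_le_one hp hb hdisjA hcard
  obtain ⟨τ, hτ⟩ := exists_perm_forall_add_le hXd fun i =>
    sum_mem_Icc_of_card_le_one hd (hcard (Equiv.swap 0 l (Fin.succ i))) fun e _ => ⟨hp e, hpd e⟩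
  refine ⟨Equiv.Perm.decomposeFin.symm (l, τ), fun i => ?_, fun i => ?_, fun i j => ?_⟩
  · have hi : Equiv.swap 0 l (τ i).succ ≠ l := fun h =>
      Fin.succ_ne_zero (τ i) ((Equiv.swap 0 l).injective (h.trans (Equiv.swap_apply_left 0 l).symm))
    simpa using ⟨hbX i, hbl _ hi⟩
  · simpa [sum_union (hdisj _ _)] using add_le_add (hX0 i) (hl _)
  · simpa [sum_union (hdisj _ _)] using hτ i j

end

section

variable {M : Type*} [Fintype M] [DecidableEq M] {c : Fin 3 → M → ℝ} {i j k : Fin 3}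

-- Agent `k` holds `X`, agent `j` takes the cheaper of `Y` and `Z`, agent `i` gets the other one.
theorem admitsEFX_of_chooser (hc : ∀ i e, 0 ≤ c i e) (hij : i ≠ j) (hik : i ≠ k) (hjk : j ≠ k)
    {X Y Z : Finset M} (hXYZ : IsPartitionOf univ ![X, Y, Z])
    (hkXY : EFXAccepts 2 (c k) X Y) (hkXZ : EFXAccepts 2 (c k) X Z)
    (hiYX : EFXAccepts 2 (c i) Y X) (hiYZ : EFXAccepts 2 (c i) Y Z)
    (hiZX : EFXAccepts 2 (c i) Z X) (hiZY : EFXAccepts 2 (c i) Z Y)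
    (hj : univ.sum (c j) ≤ 5 * X.sum (c j)) : AdmitsEFX 2 c := by
  have hsum := hXYZ.sum_vec3 (c j)
  have hY : 0 ≤ Y.sum (c j) := sum_nonneg fun e _ => hc j e
  have hZ : 0 ≤ Z.sum (c j) := sum_nonneg fun e _ => hc j e
  rcases le_total (Y.sum (c j)) (Z.sum (c j)) with h | h
  · exact admitsEFX_of_vec3 one_le_two hc hjk.symm hik.symm hij.symm hXYZ hkXY hkXZ
      (.of_sum_le (hc j) (by linarith)) (.of_sum_le (hc j) (by linarith)) hiZX hiZY
  · exact admitsEFX_of_vec3 one_le_two hc hik.symm hjk.symm hij hXYZ hkXY hkXZ hiYX hiYZ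
      (.of_sum_le (hc j) (by linarith)) (.of_sum_le (hc j) (by linarith))

theorem admitsEFX_of_common_large (hc : ∀ i e, 0 ≤ c i e) (hij : i ≠ j) {g : M}
    (hi : univ.sum (c i) ≤ 5 * c i g) (hj : univ.sum (c j) ≤ 5 * c j g) : AdmitsEFX 2 c := by
  obtain ⟨k, hik, hjk⟩ := exists_ne_ne_of_ne hij
  obtain ⟨P, Q, hPQ, hunion, hle, hefx⟩ := exists_efx_cut (hc i) ({g}ᶜ : Finset M)
  have hX : IsPartitionOf univ ![{g}, P, Q] := by
    rw [isPartitionOf_vec3_iff]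
    have hmem (e : M) : (e ∈ P ∨ e ∈ Q) ↔ e ≠ g := by simp [← mem_union, hunion]
    grind [Finset.disjoint_left]
  have hsum := hX.sum_vec3 (c i)
  rw [sum_singleton] at hsum
  have hQ : 0 ≤ Q.sum (c i) := sum_nonneg fun e _ => hc i e
  refine admitsEFX_of_chooser hc hij hik hjk hX (.singleton (hc k) zero_le_two)
    (.singleton (hc k) zero_le_two) (fun e he => ?_) (hefx.trans_le (by linarith))
    (.of_sum_le (hc i) (by rw [sum_singleton]; linarith)) (.of_sum_le (hc i) (by linarith))
    (by rwa [sum_singleton])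
  have hPe : (P \ {e}).sum (c i) ≤ P.sum (c i) :=
    sum_le_sum_of_subset_of_forall_nonneg (hc i) sdiff_subset
  rw [sum_singleton]
  linarith [hefx e he]

theorem admitsEFX_of_two_small (hc : ∀ i e, 0 ≤ c i e) (hij : i ≠ j)
    (hi : ∀ e, 5 * c i e ≤ univ.sum (c i)) (hj : ∀ e, 5 * c j e ≤ univ.sum (c j)) :
    AdmitsEFX 2 c := by
  obtain ⟨k, hik, hjk⟩ := exists_ne_ne_of_ne hij
  have hnonneg (l : Fin 3) : 0 ≤ univ.sum (c l) := sum_nonneg fun e _ => hc l e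
  obtain ⟨X, hX, hXi, hXj⟩ := exists_isPartitionOf_balanced_pair (n := 3) (hc i) (hc j)
    (d := univ.sum (c i) / 5) (m := univ.sum (c j) / 5) (by linarith [hnonneg i])
    (by linarith [hnonneg j]) (fun e => by linarith [hi e]) (fun e => by linarith [hj e]) univ
  obtain ⟨l, hl⟩ := Finite.exists_min fun l => (X l).sum (c k)
  refine ⟨X ∘ Equiv.swap k l, (hX.comp_equiv _).isAllocation, fun a b => .of_sum_le (hc a) ?_⟩
  have ha : a = i ∨ a = j ∨ a = k := by lia
  simp only [comp_apply]
  rcases ha with rfl | rfl | rfl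
  · exact sum_le_two_mul_sum_of_balanced hX (by linarith) hXi _ _
  · exact sum_le_two_mul_sum_of_balanced hX (by linarith) hXj _ _
  · rw [Equiv.swap_apply_left]
    exact (hl _).trans (le_mul_of_one_le_left (sum_nonneg fun e _ => hc a e) one_le_two)

end

/-! ### One agent without a large chore -/

section

variable {M : Type*}

theorem lt_of_isPartitionOf_of_sum_lt {ι : Type*} {S : Finset M} {X : ι → Finset M}
    (hX : IsPartitionOf S X) {p : M → ℝ} (hp : ∀ e, 0 ≤ p e) {β : ℝ} {t : ι}
    (h : ∀ l, l ≠ t → (X l).sum p < β) {a e : M} (ha : a ∈ S) (hβ : β ≤ p a)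
    (ht : (X t).sum p < β + p a) (he : e ∈ S) (hea : e ≠ a) : p e < β := by
  classical
  obtain ⟨l, hal⟩ := (hX.mem_iff a).1 ha
  obtain ⟨l', hel⟩ := (hX.mem_iff e).1 he
  have hlt {x : M} {r : ι} (hx : x ∈ X r) (hr : r ≠ t) : p x < β :=
    (single_le_sum (fun e _ => hp e) hx).trans_lt (h r hr)
  obtain rfl : l = t := by_contra fun hl => (hlt hal hl).not_ge hβ
  by_cases hl' : l' = l
  · subst hl'
    have hpair : p e + p a ≤ (X l').sum p := by
      rw [← sum_pair hea]
      exact sum_le_sum_of_subset_of_forall_nonneg hp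
        (insert_subset hel (singleton_subset_iff.2 hal))
    linarith
  · exact hlt hel hl'

-- If `X 0` is the lightest bundle and yet costs nearly twice another bundle, then everything except
-- `a` is cheap: `a` has to lie in the third bundle.
theorem sum_lt_and_lt_of_lightest_zero {X : Fin 3 → Finset M} {S : Finset M}
    (hX : IsPartitionOf S X) {p : M → ℝ} (hp : ∀ e, 0 ≤ p e) {β : ℝ} {a : M} (ha : a ∈ S)
    (hβ : β ≤ p a) (hX0 : ∀ l : Fin 2, (X 0).sum p ≤ (X l.succ).sum p)
    (hXa : ∀ l l' : Fin 2, (X l.succ).sum p ≤ (X l'.succ).sum p + p a) {s : Fin 2}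
    (hs : 2 * (X s.succ).sum p < (X 0).sum p + β) :
    S.sum p < 3 * β + p a ∧ ∀ e ∈ S, e ≠ a → p e < β := by
  obtain ⟨t, hts⟩ := exists_ne s
  have ht : (X t.succ).sum p < β + p a := by linarith [hX0 s, hXa t s]
  constructor
  · rw [← hX.sum_eq p, Fin.sum_univ_succ, Fintype.sum_eq_add s t hts.symm (by lia)]
    linarith [hX0 s]
  · have hsmall : ∀ l, l ≠ t.succ → (X l).sum p < β := by
      refine Fin.cases (fun _ => by linarith [hX0 s]) fun l hl => ?_
      obtain rfl : l = s := by grind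
      linarith [hX0 l]
    exact fun e he hea => lt_of_isPartitionOf_of_sum_lt hX hp hsmall ha hβ ht he hea

theorem sum_update_zero_add [DecidableEq M] (f : M → ℝ) {S : Finset M} {b : M} (hb : b ∈ S) :
    S.sum (update f b 0) + f b = S.sum f := by
  rw [sum_update_of_mem hb, zero_add, ← sum_eq_sum_sdiff_singleton_add hb]

theorem exists_isPartitionOf_balanced_le_or_lt {u w : M → ℝ} (hu : ∀ e, 0 ≤ u e)
    (hw : ∀ e, 0 ≤ w e) {S : Finset M} {a b : M} (hba : b ≠ a) (haS : a ∈ S) (hbS : b ∈ S)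
    (ha : ∀ e, u e ≤ u a) {m : ℝ} (hm : 0 ≤ m) (hwm : ∀ e, w e ≤ m) :
    ∃ X : Fin 3 → Finset M, IsPartitionOf S X ∧ (∀ i j, (X i).sum w ≤ (X j).sum w + m) ∧
      b ∈ X 0 ∧ ((∀ l : Fin 2, (X 0).sum u ≤ 2 * (X l.succ).sum u) ∨
        S.sum u < 4 * u b + u a ∧ ∀ e ∈ S, e ≠ a → e ≠ b → u e < u b) := by
  classical
  -- the bundles are balanced for the cost function that gives `b` away for free
  set p : M → ℝ := update u b 0
  have hpb : p b = 0 := update_self ..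
  have hpe {e : M} (he : e ≠ b) : p e = u e := update_of_ne he ..
  have hp (e : M) : 0 ≤ p e := by
    rcases eq_or_ne e b with rfl | he
    exacts [hpb.ge, hpe he ▸ hu e]
  have hpa (e : M) : p e ≤ p a := by
    rw [hpe hba.symm]
    rcases eq_or_ne e b with rfl | he
    exacts [hpb.trans_le (hu a), hpe he ▸ ha e]
  obtain ⟨X, hX, ⟨hbX, hX0, hXa⟩, hXw⟩ :=
    exists_isPartitionOf_balanced_lightest_zero (n := 2) hp hw hpb (hp a) hm hpa hwm S
  have hbX0 : b ∈ X 0 := by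
    obtain ⟨l, hl⟩ := (hX.mem_iff b).1 hbS
    induction l using Fin.cases with
    | zero => exact hl
    | succ l => exact absurd hl (hbX l)
  refine ⟨X, hX, hXw, hbX0, or_iff_not_imp_left.2 fun h => ?_⟩
  push Not at h
  obtain ⟨s, hs⟩ := h
  rw [← sum_update_zero_add u hbX0, ← sum_update_of_notMem (hbX s) u 0] at hs
  obtain ⟨hsum, hlt⟩ := sum_lt_and_lt_of_lightest_zero hX hp haS
    (hpe hba.symm ▸ ha b : u b ≤ p a) hX0 hXa hs
  rw [hpe hba.symm] at hsum
  exact ⟨by linarith [sum_update_zero_add u hbS],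
    fun e he hea heb => hpe heb ▸ hlt e he hea⟩

variable [Fintype M] [DecidableEq M] {c : Fin 3 → M → ℝ} {i j k : Fin 3} {a b : M}

theorem sum_compl_pair (f : M → ℝ) (hab : a ≠ b) :
    ({a, b}ᶜ : Finset M).sum f = univ.sum f - f a - f b := by
  rw [← sum_compl_add_sum {a, b} f, sum_pair hab]
  ring

theorem isPartitionOf_compl_pair (hab : a ≠ b) : IsPartitionOf univ ![{a, b}ᶜ, {a}, {b}] := by
  rw [isPartitionOf_vec3_iff]
  grind [Finset.disjoint_left, mem_compl]

theorem admitsEFX_of_compl_pair_le (hc : ∀ i e, 0 ≤ c i e) (hab : a ≠ b)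
    (ha : ({a, b}ᶜ : Finset M).sum (c i) ≤ 2 * c i a)
    (hb : ({a, b}ᶜ : Finset M).sum (c i) ≤ 2 * c i b) : AdmitsEFX 2 c := by
  obtain ⟨j, hji⟩ := exists_ne i
  obtain ⟨k, hik, hjk⟩ := exists_ne_ne_of_ne hji.symm
  exact admitsEFX_of_vec3 one_le_two hc hji.symm hik hjk (isPartitionOf_compl_pair hab)
    (.of_sum_le (hc i) (by rwa [sum_singleton])) (.of_sum_le (hc i) (by rwa [sum_singleton]))
    (.singleton (hc j) zero_le_two) (.singleton (hc j) zero_le_two)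
    (.singleton (hc k) zero_le_two) (.singleton (hc k) zero_le_two)

theorem admitsEFX_of_pair (hc : ∀ i e, 0 ≤ c i e) (hij : i ≠ j) (hik : i ≠ k) (hjk : j ≠ k)
    (hab : a ≠ b) (hsmall : ∀ e, 5 * c k e ≤ univ.sum (c k))
    (hj : univ.sum (c j) ≤ 5 * (c j a + c j b))
    (hle : ({a, b}ᶜ : Finset M).sum (c i) ≤ 3 * (c i a + c i b))
    (hitem : ∀ e ∈ ({a, b}ᶜ : Finset M), 2 * c i e ≤ ({a, b}ᶜ : Finset M).sum (c i)) :
    AdmitsEFX 2 c := by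
  have hW : 0 ≤ univ.sum (c k) := sum_nonneg fun e _ => hc k e
  obtain ⟨Y, hYR, ⟨hY, hZ⟩, hYu, hZu⟩ := exists_cut_le_three_mul (hc i) (hc k)
    (t := univ.sum (c k) / 10) (by linarith) (fun e _ => by linarith [hsmall e])
    (by linarith [sum_compl_pair (c k) hab, hsmall a, hsmall b]) hitem
  set Z : Finset M := {a, b}ᶜ \ Y
  have hX : IsPartitionOf univ ![{a, b}, Y, Z] := by
    rw [isPartitionOf_vec3_iff]
    grind [Finset.disjoint_left, mem_compl]
  have hYZ : Z.sum (c i) = ({a, b}ᶜ : Finset M).sum (c i) - Y.sum (c i) := sum_sdiff_eq_sub hYR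
  have hpair (f : M → ℝ) : ({a, b} : Finset M).sum f = f a + f b := sum_pair hab
  exact admitsEFX_of_chooser hc hij hik hjk hX
    (.pair hab (by linarith [hsmall a]) (by linarith [hsmall b]))
    (.pair hab (by linarith [hsmall a]) (by linarith [hsmall b]))
    (.of_sum_le (hc i) (by rw [hpair]; linarith)) (.of_sum_le (hc i) (by linarith))
    (.of_sum_le (hc i) (by rw [hpair]; linarith)) (.of_sum_le (hc i) (by linarith))
    (by rwa [hpair])

theorem admitsEFX_of_one_small (hc : ∀ i e, 0 ≤ c i e) (hij : i ≠ j) (hik : i ≠ k) (hjk : j ≠ k)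
    (hab : a ≠ b) (hsmall : ∀ e, 5 * c k e ≤ univ.sum (c k)) (ha : ∀ e, c i e ≤ c i a)
    (hb : univ.sum (c j) ≤ 5 * c j b) : AdmitsEFX 2 c := by
  obtain ⟨X, hX, hXw, hbX, h | ⟨hsum, hlt⟩⟩ := exists_isPartitionOf_balanced_le_or_lt (hc i) (hc k)
    hab.symm (mem_univ a) (mem_univ b) ha (m := univ.sum (c k) / 5)
    (by linarith [hsmall b, hc k b]) (fun e => by linarith [hsmall e])
  · have hbj : c j b ≤ (X 0).sum (c j) := single_le_sum (fun e _ => hc j e) hbX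
    have hw := sum_le_two_mul_sum_of_balanced hX (by linarith) hXw
    exact admitsEFX_of_chooser hc hjk.symm hik.symm hij.symm ((FinVec.etaExpand_eq X).symm ▸ hX)
      (.of_sum_le (hc i) (h 0)) (.of_sum_le (hc i) (h 1))
      (.of_sum_le (hc k) (hw _ _)) (.of_sum_le (hc k) (hw _ _))
      (.of_sum_le (hc k) (hw _ _)) (.of_sum_le (hc k) (hw _ _)) (by linarith)
  have hcompl := sum_compl_pair (c i) hab
  by_cases hR : ({a, b}ᶜ : Finset M).sum (c i) ≤ 2 * c i b
  · exact admitsEFX_of_compl_pair_le hc hab (by linarith [ha b]) hR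
  refine admitsEFX_of_pair hc hij hik hjk hab hsmall (by linarith [hc j a])
    (by linarith [hc i a]) fun e he => ?_
  have hne : e ≠ a ∧ e ≠ b := by simpa using he
  linarith [hlt e (mem_univ e) hne.1 hne.2]

end

/-! ### Three distinct large chores -/

section

variable {M : Type*} [Fintype M]

/-- The chore `g` is a most expensive one and costs at least a fifth of the total. An agent without
such a chore finds every chore cheaper than a fifth of the total. -/
def IsLargeItem (u : M → ℝ) (g : M) : Prop :=
  (∀ e, u e ≤ u g) ∧ univ.sum u ≤ 5 * u g

theorem five_mul_le_sum_of_not_isLargeItem {u : M → ℝ} (h : ∀ g, ¬IsLargeItem u g) (e : M) :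
    5 * u e ≤ univ.sum u := by
  have : Nonempty M := ⟨e⟩
  obtain ⟨g, hg⟩ := Finite.exists_max u
  have hlt : 5 * u g < univ.sum u := by
    by_contra! hle
    exact h g ⟨hg, hle⟩
  linarith [hg e]

variable [DecidableEq M]

/-- The normal chores: those other than the given `g i`, which will be the large chores of the three
agents. -/
def normalItems {ι : Type*} [Fintype ι] (g : ι → M) : Finset M :=
  (univ.image g)ᶜ

variable {c : Fin 3 → M → ℝ} {g : Fin 3 → M} {i j k : Fin 3}

theorem normalItems_eq_compl (hij : i ≠ j) (hik : i ≠ k) (hjk : j ≠ k) :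
    normalItems g = {g i, g j, g k}ᶜ := by
  have huniv : (univ : Finset (Fin 3)) = {i, j, k} := by
    ext l
    simp only [mem_univ, mem_insert, mem_singleton, true_iff]
    lia
  rw [normalItems, huniv, image_insert, image_insert, image_singleton]

theorem mem_normalItems (hij : i ≠ j) (hik : i ≠ k) (hjk : j ≠ k) {e : M} :
    e ∈ normalItems g ↔ e ≠ g i ∧ e ≠ g j ∧ e ≠ g k := by
  simp only [normalItems_eq_compl hij hik hjk, mem_compl, mem_insert, mem_singleton, not_or]

theorem sum_add_sum_normalItems (hg : Injective g) (hij : i ≠ j) (hik : i ≠ k) (hjk : j ≠ k)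
    (f : M → ℝ) : f (g i) + f (g j) + f (g k) + (normalItems g).sum f = univ.sum f := by
  rw [← sum_add_sum_compl {g i, g j, g k} f, normalItems_eq_compl hij hik hjk,
    sum_triple (hg.ne hij) (hg.ne hik) (hg.ne hjk)]

theorem lt_sum_normalItems (hc : ∀ i e, 0 ≤ c i e) (hg : Injective g)
    (hmax : ∀ i e, c i e ≤ c i (g i)) (hcon : ¬AdmitsEFX 2 c) (hij : i ≠ j) :
    c i (g j) < (normalItems g).sum (c i) := by
  have hkey {j k : Fin 3} (hij : i ≠ j) (hik : i ≠ k) (hjk : j ≠ k)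
      (hle : c i (g j) ≤ c i (g k)) : c i (g k) < (normalItems g).sum (c i) := by
    by_contra! h
    have hsum := sum_add_sum_normalItems hg hij hik hjk (c i)
    have hcompl := sum_compl_pair (c i) (hg.ne hik)
    exact hcon (admitsEFX_of_compl_pair_le hc (hg.ne hik) (by linarith [hmax i (g k)])
      (by linarith))
  obtain ⟨k, hik, hjk⟩ := exists_ne_ne_of_ne hij
  rcases le_total (c i (g j)) (c i (g k)) with h | h
  · exact h.trans_lt (hkey hij hik hjk h)
  · exact hkey hik hij hjk.symm h

theorem two_mul_lt_sum_normalItems (hc : ∀ i e, 0 ≤ c i e) (hg : Injective g)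
    (hmax : ∀ i e, c i e ≤ c i (g i)) (hcon : ¬AdmitsEFX 2 c) (hij : i ≠ j) :
    2 * c i (g j) < (normalItems g).sum (c i) := by
  obtain ⟨k, hik, hjk⟩ := exists_ne_ne_of_ne hij
  by_contra! h
  have hX : IsPartitionOf univ ![normalItems g, {g j}, {g i, g k}] := by
    rw [isPartitionOf_vec3_iff]
    grind [Finset.disjoint_left, mem_normalItems hij hik hjk, hg.ne hij, hg.ne hik, hg.ne hjk]
  refine hcon (admitsEFX_of_vec3 one_le_two hc hik hij hjk.symm hX (.of_sum_le (hc i) ?_)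
    (.of_sum_le (hc i) ?_) (.singleton (hc k) zero_le_two) (.singleton (hc k) zero_le_two)
    (.pair (hg.ne hik) ?_ ?_) (.pair (hg.ne hik) ?_ ?_))
  · rwa [sum_singleton]
  · rw [sum_pair (hg.ne hik)]
    linarith [hmax i (g j), hc i (g k)]
  · linarith [lt_sum_normalItems hc hg hmax hcon hij.symm, hc j (g i)]
  · linarith [lt_sum_normalItems hc hg hmax hcon hjk, hc j (g k)]
  · rw [sum_singleton]
    linarith [hmax j (g i), hc j (g i)]
  · rw [sum_singleton]
    linarith [hmax j (g k), hc j (g k)]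

end

section

variable {M : Type*} [DecidableEq M]

theorem le_sum_sdiff_singleton {u : M → ℝ} (hu : ∀ e, 0 ≤ u e) {P : Finset M} {e : M}
    (he : e ∈ P) (hmin : ∀ x ∈ P, u e ≤ u x) (hPe : P ≠ {e}) : u e ≤ (P \ {e}).sum u := by
  obtain ⟨x, hx, hxe⟩ : ∃ x ∈ P, x ≠ e := by
    by_contra! h
    exact hPe (eq_singleton_iff_unique_mem.2 ⟨he, h⟩)
  exact (hmin x hx).trans (single_le_sum (fun y _ => hu y) (by simp [hx, hxe]))

theorem efxAccepts_insert_sdiff_singleton {u : M → ℝ} (hu : ∀ e, 0 ≤ u e) {P Q : Finset M} {d e : M}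
    (he : e ∈ P) (hmin : ∀ x ∈ P, u e ≤ u x) (hefx : EFXAccepts 1 u P Q) (hd : d ∉ P)
    (hle : 2 * u d ≤ P.sum u + Q.sum u) :
    EFXAccepts 2 u (insert d (P \ {e})) Q := by
  have hQ : 0 ≤ Q.sum u := sum_nonneg fun x _ => hu x
  have hPe := hefx e he
  have hrest := sum_eq_sum_sdiff_singleton_add he u
  rw [EFXAccepts.iff_sum_le, sum_insert fun h => hd (mem_sdiff.1 h).1,
    forall_mem_insert]
  exact ⟨by linarith, fun x hx => by linarith [hmin x (mem_sdiff.1 hx).1, hu e]⟩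

variable [Fintype M] {c : Fin 3 → M → ℝ} {g : Fin 3 → M} {i j k : Fin 3}

-- Agent `i` cuts the normal chores into `P` and `Q`; agent `k` holds the large chores of the other
-- two and can accept `P` if it costs her at least a quarter of the normal chores.
theorem admitsEFX_of_cut_le_four_mul (hc : ∀ i e, 0 ≤ c i e) (hg : Injective g)
    (hlarge : ∀ i, IsLargeItem (c i) (g i))
    (hN : ∀ x y, x ≠ y → 2 * c x (g y) < (normalItems g).sum (c x))
    (hij : i ≠ j) (hik : i ≠ k) (hjk : j ≠ k) (hle : c i (g k) ≤ c i (g j)) {P Q : Finset M}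
    (hPQ : Disjoint P Q) (hunion : P ∪ Q = normalItems g) (hQP : Q.sum (c i) ≤ P.sum (c i))
    (hefx : EFXAccepts 1 (c i) P Q) (hP : (normalItems g).sum (c k) ≤ 4 * P.sum (c k)) :
    AdmitsEFX 2 c := by
  have hmem (e : M) : (e ∈ P ∨ e ∈ Q) ↔ e ≠ g i ∧ e ≠ g j ∧ e ≠ g k := by
    rw [← mem_union, hunion, mem_normalItems hij hik hjk]
  have hkQ : g k ∉ Q := fun h => ((hmem _).1 (.inr h)).2.2 rfl
  have hX : IsPartitionOf univ ![{g i, g j}, insert (g k) Q, P] := by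
    rw [isPartitionOf_vec3_iff]
    grind [Finset.disjoint_left, hg.ne hij, hg.ne hik, hg.ne hjk]
  have hsum : P.sum (c i) + Q.sum (c i) = (normalItems g).sum (c i) := by
    rw [← sum_union hPQ, hunion]
  have hall := sum_add_sum_normalItems hg hij hik hjk (c i)
  have hX' (l : Fin 3) : ({g i, g j} : Finset M).sum (c l) = c l (g i) + c l (g j) :=
    sum_pair (hg.ne hij)
  have hY (l : Fin 3) : (insert (g k) Q).sum (c l) = c l (g k) + Q.sum (c l) := sum_insert hkQ
  have hQ (l : Fin 3) : 0 ≤ Q.sum (c l) := sum_nonneg fun e _ => hc l e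
  refine admitsEFX_of_chooser hc hij hik hjk hX
    (.pair (hg.ne hij) ?_ ?_) (.pair (hg.ne hij) ?_ ?_) (.of_sum_le (hc i) ?_)
    (.of_sum_le (hc i) ?_) (hefx.trans_le ?_) (hefx.trans_le ?_) ?_
  · linarith [hY k, hQ k, (hlarge k).1 (g i), hc k (g i)]
  · linarith [hY k, hQ k, (hlarge k).1 (g j), hc k (g j)]
  · linarith [hN k i hik.symm]
  · linarith [hN k j hjk.symm]
  · linarith [hX' i, hY i, (hlarge i).2, hc i (g k)]
  · linarith [hY i, hN i k hik]
  · linarith [hX' i, (hlarge i).2, hc i (g j), hc i (g k)]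
  · linarith [hY i, hQ i, hc i (g k)]
  · linarith [hX' j, (hlarge j).2, hc j (g i)]

-- If `P` costs agent `k` less than a quarter of the normal chores, then she can afford to hold a
-- chore of `P` as well, and accepts `Q`. Its removal makes room for `g k` in `P`.
theorem admitsEFX_of_four_mul_cut_lt (hc : ∀ i e, 0 ≤ c i e) (hg : Injective g)
    (hlarge : ∀ i, IsLargeItem (c i) (g i))
    (hN : ∀ x y, x ≠ y → 2 * c x (g y) < (normalItems g).sum (c x))
    (hij : i ≠ j) (hik : i ≠ k) (hjk : j ≠ k) (hle : c i (g k) ≤ c i (g j)) {P Q : Finset M}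
    (hPQ : Disjoint P Q) (hunion : P ∪ Q = normalItems g) (hQP : Q.sum (c i) ≤ P.sum (c i))
    (hefx : EFXAccepts 1 (c i) P Q) (hP : 4 * P.sum (c k) < (normalItems g).sum (c k))
    {e : M} (he : e ∈ P) (hmin : ∀ x ∈ P, c i e ≤ c i x) (hPe : P ≠ {e}) :
    AdmitsEFX 2 c := by
  have hmem (x : M) : (x ∈ P ∨ x ∈ Q) ↔ x ≠ g i ∧ x ≠ g j ∧ x ≠ g k := by
    rw [← mem_union, hunion, mem_normalItems hij hik hjk]
  have hei : g i ≠ e := fun h => ((hmem e).1 (.inl he)).1 h.symm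
  have hej : g j ≠ e := fun h => ((hmem e).1 (.inl he)).2.1 h.symm
  have hkP : g k ∉ P := fun h => ((hmem _).1 (.inl h)).2.2 rfl
  have hX : IsPartitionOf univ ![{g i, g j, e}, insert (g k) (P \ {e}), Q] := by
    rw [isPartitionOf_vec3_iff]
    grind [Finset.disjoint_left, hg.ne hij, hg.ne hik, hg.ne hjk]
  have hsum (l : Fin 3) : P.sum (c l) + Q.sum (c l) = (normalItems g).sum (c l) := by
    rw [← sum_union hPQ, hunion]
  have hall := sum_add_sum_normalItems hg hij hik hjk (c i)
  have hX' (l : Fin 3) := sum_triple (hg.ne hij) hei hej (c l)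
  have hrest := sum_eq_sum_sdiff_singleton_add he (c i)
  have hY (l : Fin 3) : (insert (g k) (P \ {e})).sum (c l) =
      c l (g k) + (P \ {e}).sum (c l) := sum_insert fun h => hkP (mem_sdiff.1 h).1
  have hnonneg (l : Fin 3) (S : Finset M) : 0 ≤ S.sum (c l) := sum_nonneg fun x _ => hc l x
  have hke : c k e ≤ P.sum (c k) := single_le_sum (fun x _ => hc k x) he
  have hie := le_sum_sdiff_singleton (hc i) he hmin hPe
  have hPeQ := hefx e he
  have hki := hN k i hik.symm
  have hkj := hN k j hjk.symm
  have hle_gk (x : M) : 2 * c k x ≤ 2 * (insert (g k) (P \ {e})).sum (c k) := by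
    linarith [hY k, (hlarge k).1 x, hnonneg k (P \ {e})]
  refine admitsEFX_of_chooser hc hij hik hjk hX
    (.triple (hg.ne hij) hei hej ?_ ?_ ?_) (.triple (hg.ne hij) hei hej ?_ ?_ ?_)
    (.of_sum_le (hc i) ?_) (efxAccepts_insert_sdiff_singleton (hc i) he hmin hefx hkP ?_)
    (.of_sum_le (hc i) ?_) (.of_sum_le (hc i) ?_) ?_
  iterate 3 linarith [hle_gk (g i), hle_gk (g j), hle_gk e]
  iterate 3 linarith [hsum k, hc k e]
  · linarith [hX' i, hY i, hrest, (hlarge i).2, hc i e, hsum i, hc i (g k)]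
  · linarith [hN i k hik, hsum i]
  · linarith [hX' i, hsum i, (hlarge i).2, hc i (g j), hc i (g k), hc i e]
  · linarith [hY i, hrest, hc i (g k)]
  · linarith [hX' j, (hlarge j).2, hc j (g i), hc j e]

theorem exists_sum_normalItems_le_two_mul (hc : ∀ i e, 0 ≤ c i e) (hg : Injective g)
    (hlarge : ∀ i, IsLargeItem (c i) (g i))
    (hN : ∀ x y, x ≠ y → 2 * c x (g y) < (normalItems g).sum (c x)) (hcon : ¬AdmitsEFX 2 c)
    (i : Fin 3) : ∃ h ∈ normalItems g, (normalItems g).sum (c i) ≤ 2 * c i h := by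
  obtain ⟨j, k, hij, hik, hjk, hle⟩ :
      ∃ j k, i ≠ j ∧ i ≠ k ∧ j ≠ k ∧ c i (g k) ≤ c i (g j) := by
    obtain ⟨j, hji⟩ := exists_ne i
    obtain ⟨k, hik, hjk⟩ := exists_ne_ne_of_ne hji.symm
    rcases le_total (c i (g j)) (c i (g k)) with h | h
    exacts [⟨k, j, hik, hji.symm, hjk.symm, h⟩, ⟨j, k, hji.symm, hik, hjk, h⟩]
  obtain ⟨P, Q, hPQ, hunion, hQP, hefx⟩ := exists_efx_cut (hc i) (normalItems g)
  have hP : 4 * P.sum (c k) < (normalItems g).sum (c k) := lt_of_not_ge fun h =>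
    hcon (admitsEFX_of_cut_le_four_mul hc hg hlarge hN hij hik hjk hle hPQ hunion hQP hefx h)
  have hsum : P.sum (c i) + Q.sum (c i) = (normalItems g).sum (c i) := by
    rw [← sum_union hPQ, hunion]
  have hPpos : 0 < P.sum (c i) := by linarith [hN i k hik, hc i (g k)]
  obtain ⟨e, he, hmin⟩ := exists_min_image P (c i) (nonempty_of_sum_ne_zero hPpos.ne')
  obtain rfl : P = {e} := by_contra fun h => hcon (admitsEFX_of_four_mul_cut_lt hc hg hlarge hN
    hij hik hjk hle hPQ hunion hQP hefx hP he hmin h)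
  rw [sum_singleton] at hsum hQP
  exact ⟨e, hunion ▸ mem_union_left Q he, by linarith⟩

end

section

variable {M : Type*} [Fintype M] [DecidableEq M] {c : Fin 3 → M → ℝ} {g : Fin 3 → M}
  {i j k : Fin 3}

theorem admitsEFX_of_common_dominating (hc : ∀ i e, 0 ≤ c i e) (hg : Injective g)
    (hmax : ∀ i e, c i e ≤ c i (g i))
    (hN : ∀ x y, x ≠ y → 2 * c x (g y) < (normalItems g).sum (c x)) (hik : i ≠ k) {h : M}
    (hh : h ∈ normalItems g) (hi : (normalItems g).sum (c i) ≤ 2 * c i h)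
    (hk : (normalItems g).sum (c k) ≤ 2 * c k h) : AdmitsEFX 2 c := by
  obtain ⟨j, hij, hkj⟩ := exists_ne_ne_of_ne hik
  have hjk := hkj.symm
  have hX : IsPartitionOf univ ![{g j, g k}, {h}, insert (g i) (normalItems g \ {h})] := by
    rw [isPartitionOf_vec3_iff]
    grind [Finset.disjoint_left, mem_normalItems hij hik hjk, hg.ne hij, hg.ne hik, hg.ne hjk]
  have hgi : g i ∉ normalItems g \ {h} := by simp [mem_normalItems hij hik hjk]
  have hC (l : Fin 3) : (insert (g i) (normalItems g \ {h})).sum (c l) + c l h =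
      c l (g i) + (normalItems g).sum (c l) := by
    rw [sum_insert hgi, add_assoc, ← sum_eq_sum_sdiff_singleton_add hh]
  have hh' (l : Fin 3) : c l h ≤ (normalItems g).sum (c l) :=
    single_le_sum (fun x _ => hc l x) hh
  refine admitsEFX_of_vec3 one_le_two hc hij hik hjk hX (.pair (hg.ne hjk) ?_ ?_)
    (.pair (hg.ne hjk) ?_ ?_) (.singleton (hc j) zero_le_two) (.singleton (hc j) zero_le_two)
    (.of_sum_le (hc k) ?_) (.of_sum_le (hc k) ?_)
  · rw [sum_singleton]
    linarith [hN i j hij, hc i h]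
  · rw [sum_singleton]
    linarith [hN i k hik, hc i h]
  · linarith [hC i, hh' i, hmax i (g j), hc i (g i)]
  · linarith [hC i, hh' i, hmax i (g k), hc i (g i)]
  · rw [sum_pair (hg.ne hjk)]
    linarith [hC k, hmax k h, hmax k (g i), hc k (g j)]
  · rw [sum_singleton]
    linarith [hC k, hN k i hik.symm, hc k (g i)]

theorem admitsEFX_of_dominating_ne (hc : ∀ i e, 0 ≤ c i e) (hg : Injective g)
    (hmax : ∀ i e, c i e ≤ c i (g i))
    (hN : ∀ x y, x ≠ y → 2 * c x (g y) < (normalItems g).sum (c x))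
    (hij : i ≠ j) (hik : i ≠ k) (hjk : j ≠ k) {h : Fin 3 → M} (hh : ∀ i, h i ∈ normalItems g)
    (hdom : ∀ i, (normalItems g).sum (c i) ≤ 2 * c i (h i)) (hhik : h i ≠ h k)
    (hhjk : h j ≠ h k) : AdmitsEFX 2 c := by
  have hX : IsPartitionOf univ ![{g j, g k}, {g i, h k}, normalItems g \ {h k}] := by
    rw [isPartitionOf_vec3_iff]
    grind [Finset.disjoint_left, mem_normalItems hij hik hjk, hg.ne hij, hg.ne hik, hg.ne hjk]
  have hgh : g i ≠ h k := fun he => ((mem_normalItems hij hik hjk).1 (hh k)).1 he.symm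
  have hrest (l : Fin 3) := sum_eq_sum_sdiff_singleton_add (hh k) (c l)
  have hle {l : Fin 3} (hl : h l ≠ h k) : c l (h l) ≤ (normalItems g \ {h k}).sum (c l) :=
    single_le_sum (fun x _ => hc l x) (by simp [hh l, hl])
  have hpair := sum_pair (f := c j) (hg.ne hjk)
  refine admitsEFX_of_vec3 one_le_two hc hij hik hjk hX (.pair (hg.ne hjk) ?_ ?_)
    (.pair (hg.ne hjk) ?_ ?_) (.pair hgh ?_ ?_) (.pair hgh ?_ ?_)
    (.of_sum_le (hc k) ?_) (.of_sum_le (hc k) ?_)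
  · rw [sum_pair hgh]
    linarith [hmax i (g j), hc i (g i), hc i (h k)]
  · rw [sum_pair hgh]
    linarith [hmax i (g k), hc i (g i), hc i (h k)]
  · linarith [hle hhik, hdom i, hN i j hij, hc i (g j)]
  · linarith [hle hhik, hdom i, hN i k hik, hc i (g k)]
  · linarith [hmax j (g i), hc j (g i), hc j (g k)]
  · linarith [hmax j (h k), hc j (h k), hc j (g k)]
  · linarith [hle hhjk, hdom j, hN j i hij.symm, hc j (g i)]
  · linarith [hle hhjk, hdom j, hrest j, hc j (h j)]
  · rw [sum_pair (hg.ne hjk)]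
    linarith [hrest k, hdom k, hmax k (h k), hc k (g j), hc k (h k)]
  · rw [sum_pair hgh]
    linarith [hrest k, hdom k, hc k (g i), hc k (h k)]

theorem admitsEFX_of_injective_large (hc : ∀ i e, 0 ≤ c i e) (hg : Injective g)
    (hlarge : ∀ i, IsLargeItem (c i) (g i)) : AdmitsEFX 2 c := by
  by_contra hcon
  have hmax (i e) : c i e ≤ c i (g i) := (hlarge i).1 e
  have hN (x y) (hxy : x ≠ y) := two_mul_lt_sum_normalItems hc hg hmax hcon hxy
  choose h hh hdom using exists_sum_normalItems_le_two_mul hc hg hlarge hN hcon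
  have hne {i k : Fin 3} (hik : i ≠ k) : h i ≠ h k := fun he => hcon
    (admitsEFX_of_common_dominating hc hg hmax hN hik (hh i) (hdom i) (he ▸ hdom k))
  exact hcon (admitsEFX_of_dominating_ne (i := 0) (j := 1) (k := 2) hc hg hmax hN (by decide)
    (by decide) (by decide) hh hdom (hne (by decide)) (hne (by decide)))

end

end

/-- For any chore-division instance with three agents and additive cost functions
(given by nonnegative item costs `w`), a `2`-EFX allocation exists. -/
theorem two_efx_exists_three_agents
    (M : Type*) [Fintype M] [DecidableEq M]
    (w : Fin 3 → M → ℝ) (hw : ∀ i e, 0 ≤ w i e) :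
    ∃ X : Fin 3 → Finset M, IsAllocation X ∧
      ∀ i j : Fin 3, ∀ e ∈ X i,
        ∑ f ∈ X i \ {e}, w i f ≤ 2 * ∑ f ∈ X j, w i f := by
  change AdmitsEFX 2 w
  by_contra hcon
  have hne {i j : Fin 3} (hij : i ≠ j) {a b : M} (ha : IsLargeItem (w i) a)
      (hb : IsLargeItem (w j) b) : a ≠ b := by
    rintro rfl
    exact hcon (admitsEFX_of_common_large hw hij ha.2 hb.2)
  by_cases hlarge : ∀ i, ∃ g, IsLargeItem (w i) g
  · choose g hg using hlarge
    exact hcon (admitsEFX_of_injective_large hw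
      (Function.injective_iff_pairwise_ne.2 fun i j hij => hne hij (hg i) (hg j)) hg)
  push Not at hlarge
  obtain ⟨k, hk⟩ := hlarge
  have hsmall := five_mul_le_sum_of_not_isLargeItem hk
  have hlarge' {i : Fin 3} (hik : i ≠ k) : ∃ g, IsLargeItem (w i) g := by
    by_contra! hi
    exact hcon (admitsEFX_of_two_small hw hik (five_mul_le_sum_of_not_isLargeItem hi) hsmall)
  obtain ⟨i, hik⟩ := exists_ne k
  obtain ⟨j, hij, hkj⟩ := exists_ne_ne_of_ne hik
  obtain ⟨a, ha⟩ := hlarge' hik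
  obtain ⟨b, hb⟩ := hlarge' hkj.symm
  exact hcon (admitsEFX_of_one_small hw hij hik hkj.symm (hne hij ha hb) hsmall ha.1 hb.2)
end
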